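/- (Square-exponential moment implies T₁ with explicit constant) Let (𝒳,d) be a Polish metric space, μ ∈ P(𝒳), and b > 0. If M := ∫_{𝒳×𝒳} e^{b² d(x,y)²/2} dμ(x) dμ(y) < ∞, then for every ν ∈ P(𝒳), 𝒯_d(ν,μ) ≤ (1/b)·√(1 + 2 log M)·√(2 H(ν|μ)). -/

import Mathlib

open MeasureTheory ENNReal

/-- The optimal transport cost `𝒯_c(ν, μ)` associated with the cost function `c`:
the infimum of `∫ c dπ` over all couplings `π` of `ν` and `μ`. -/
noncomputable def optCost {X : Type*} [MeasurableSpace X] (c : X → X → ℝ)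
    (ν μ : Measure X) : ℝ≥0∞ :=
  ⨅ (π : Measure (X × X)) (_ : π.map Prod.fst = ν ∧ π.map Prod.snd = μ),
    ∫⁻ p, ENNReal.ofReal (c p.1 p.2) ∂π

open Classical in
/-- The relative entropy `H(ν|μ)`: it equals `∫ h(dν/dμ) dμ` with
`h(t) = t log t - t + 1 ≥ 0` if `ν ≪ μ`, and `+∞` otherwise.  For probability
measures `ν ≪ μ` this coincides with `∫ log (dν/dμ) dν`. -/
noncomputable def relEntropy {X : Type*} [MeasurableSpace X] (ν μ : Measure X) : ℝ≥0∞ :=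
  if ν ≪ μ then
    ∫⁻ x, ENNReal.ofReal ((ν.rnDeriv μ x).toReal * Real.log (ν.rnDeriv μ x).toReal
      - (ν.rnDeriv μ x).toReal + 1) ∂μ
  else ∞

/-!
Let `α = ν - μ` and `β = μ - ν` be the excess parts of the two measures, of common mass `m`, and
let `θ = b² c² / 2`. Leaving the common part of `ν` and `μ` in place and moving `α` to `β` by the
product coupling `m⁻¹ • α.prod β` gives, by Cauchy–Schwarz, `𝒯_c(ν, μ)² ≤ ∫∫ c² d(α ⊗ β)`. With
`f = dν/dμ`, the measure `α ⊗ β` lives on `{f > 1} × {f < 1}`, which together with its mirror image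
carries at most the mass `M` of `e^θ d(μ ⊗ μ)`, so the entropy (Young) inequality
`q (θ + 1) ≤ q log q + e^θ` can be used with `M / 2` in place of `M`. This saving is what yields
`∫∫ θ d(α ⊗ β) ≤ H(ν|μ) + m² log M`, and Pinsker's inequality `m² ≤ 2 H(ν|μ)` concludes.
-/

open InformationTheory

section RealInequalities

variable {t r m θ M : ℝ}

lemma log_le_log_add_div_sub_one {x y : ℝ} (hx : 0 < x) (hy : 0 < y) :
    Real.log x ≤ Real.log y + (x / y - 1) := by
  have h := Real.log_le_sub_one_of_pos (div_pos hx hy)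
  rw [Real.log_div hx.ne' hy.ne'] at h
  linarith

lemma sq_one_sub_div_two_le_klFun (ht₀ : 0 ≤ t) (ht₁ : t ≤ 1) :
    (1 - t) ^ 2 / 2 ≤ klFun t := by
  rcases ht₀.eq_or_lt with rfl | ht₀
  · norm_num [klFun_zero]
  have hsinh := Real.self_le_sinh_iff.2 (Real.log_nonneg ((one_le_inv₀ ht₀).2 ht₁))
  rw [Real.sinh_log (by positivity), Real.log_inv, inv_inv] at hsinh
  have hmul := mul_le_mul_of_nonneg_left hsinh ht₀.le
  have hcancel : t * ((t⁻¹ - t) / 2) = (1 - t ^ 2) / 2 := by field_simp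
  rw [klFun_apply]
  linarith

lemma two_mul_sub_one_div_le_log (ht : 1 ≤ t) : 2 * (t - 1) / (t + 1) ≤ Real.log t := by
  convert Real.le_log_one_add_of_nonneg (sub_nonneg.2 ht) using 2 <;> ring

lemma sq_sub_one_div_le_klFun (ht : 1 ≤ t) : (t - 1) ^ 2 / (t + 1) ≤ klFun t := by
  have hlog := mul_le_mul_of_nonneg_left (two_mul_sub_one_div_le_log ht) (zero_le_one.trans ht)
  calc (t - 1) ^ 2 / (t + 1) = t * (2 * (t - 1) / (t + 1)) + 1 - t := by
        field_simp
        ring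
    _ ≤ klFun t := by rw [klFun_apply]; linarith

lemma mul_one_sub_mul_log_add_one_le_klFun (ht₀ : 0 ≤ t) (ht₁ : t < 1) (hm : 0 < m) :
    m * (1 - t) * (Real.log ((1 - t) / (2 * m)) + 1) ≤ klFun t := by
  have hs : 0 < 1 - t := sub_pos.2 ht₁
  calc m * (1 - t) * (Real.log ((1 - t) / (2 * m)) + 1)
      ≤ m * (1 - t) * ((1 - t) / (2 * m)) := by
        gcongr
        linarith [Real.log_le_sub_one_of_pos (x := (1 - t) / (2 * m)) (by positivity)]
    _ = (1 - t) ^ 2 / 2 := by field_simp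
    _ ≤ klFun t := sq_one_sub_div_two_le_klFun ht₀ ht₁.le

lemma sub_one_mul_log_add_one_sub_two_le_klFun (ht : 1 < t) :
    (t - 1) * (Real.log (t + 1) - 2 + (t - 1) / (t + 1)) ≤ klFun t := by
  have hs : 0 < t - 1 := sub_pos.2 ht
  have hlog : Real.log (t + 1) ≤ Real.log t + 1 / t := by
    have h := log_le_log_add_div_sub_one (x := t + 1) (y := t) (by linarith) (by linarith)
    have h' : (t + 1) / t - 1 = 1 / t := by field_simp; ring
    rwa [h'] at h
  have hrat : 1 / t + (t - 1) / (t + 1) ≤ 1 + 2 / (t + 1) := by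
    rw [← sub_nonneg]
    have h : 1 + 2 / (t + 1) - (1 / t + (t - 1) / (t + 1)) = (3 * t - 1) / (t * (t + 1)) := by
      field_simp
      ring
    rw [h]
    exact div_nonneg (by linarith) (by positivity)
  calc (t - 1) * (Real.log (t + 1) - 2 + (t - 1) / (t + 1))
      ≤ (t - 1) * (Real.log t + (2 / (t + 1) - 1)) :=
        mul_le_mul_of_nonneg_left (by linarith) hs.le
    _ = (t - 1) * Real.log t + 2 * (t - 1) / (t + 1) + 1 - t := by ring
    _ ≤ klFun t := by rw [klFun_apply]; linarith [two_mul_sub_one_div_le_log ht.le]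

-- The tangent of `log` at `t + 1` turns the left-hand side into an affine function of `m`, so that
-- only the endpoints `m = 0` and `m = 1` need to be checked.
lemma mul_sub_one_mul_log_sub_one_le_klFun (ht : 1 < t) (hm₀ : 0 < m) (hm₁ : m ≤ 1) :
    m * (t - 1) * (Real.log ((t - 1) / m) - 1) ≤ klFun t := by
  have hs : 0 < t - 1 := sub_pos.2 ht
  calc m * (t - 1) * (Real.log ((t - 1) / m) - 1)
      ≤ m * (t - 1) * (Real.log (t + 1) + ((t - 1) / m / (t + 1) - 1) - 1) := by
        gcongr
        exact log_le_log_add_div_sub_one (by positivity) (by positivity)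
    _ = (1 - m) * ((t - 1) ^ 2 / (t + 1))
          + m * ((t - 1) * (Real.log (t + 1) - 2 + (t - 1) / (t + 1))) := by
        field_simp
        ring
    _ ≤ (1 - m) * klFun t + m * klFun t := by
        gcongr
        · exact sq_sub_one_div_le_klFun ht.le
        · exact sub_one_mul_log_add_one_sub_two_le_klFun ht
    _ = klFun t := by ring

lemma mul_add_one_le_mul_log_add_exp {x : ℝ} (hx : 0 < x) (θ : ℝ) :
    x * (θ + 1) ≤ x * Real.log x + Real.exp θ := by
  have h := log_le_log_add_div_sub_one (Real.exp_pos θ) hx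
  rw [Real.log_exp] at h
  calc x * (θ + 1) ≤ x * (Real.log x + Real.exp θ / x) :=
        mul_le_mul_of_nonneg_left (by linarith) hx.le
    _ = x * Real.log x + Real.exp θ := by field_simp

-- Young's inequality for the density `(t - 1) * (1 - r) / m ^ 2` of the normalized `α ⊗ β` relative
-- to `2 * exp θ / M`, whose mass on `{f > 1} × {f < 1}` is at most `1`.
lemma sub_one_mul_one_sub_mul_add_one_le (ht : 1 < t) (hr₀ : 0 ≤ r) (hr₁ : r < 1)
    (hm₀ : 0 < m) (hm₁ : m ≤ 1) (hM : 0 < M) :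
    (t - 1) * (1 - r) * (θ + 1) ≤
      m⁻¹ * (klFun t * (1 - r) + (t - 1) * klFun r) + Real.log M * ((t - 1) * (1 - r))
        + 2 * m ^ 2 / M * Real.exp θ := by
  have hu : 0 < t - 1 := sub_pos.2 ht
  have hv : 0 < 1 - r := sub_pos.2 hr₁
  set q := (t - 1) / m * ((1 - r) / (2 * m)) * M with hq
  have hlog : Real.log q =
      (Real.log ((t - 1) / m) - 1) + (Real.log ((1 - r) / (2 * m)) + 1) + Real.log M := by
    rw [hq, Real.log_mul (by positivity) (by positivity),
      Real.log_mul (by positivity) (by positivity)]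
    ring
  calc (t - 1) * (1 - r) * (θ + 1) = 2 * m ^ 2 / M * (q * (θ + 1)) := by rw [hq]; field_simp
    _ ≤ 2 * m ^ 2 / M * (q * Real.log q + Real.exp θ) := by
        gcongr
        exact mul_add_one_le_mul_log_add_exp (by positivity) θ
    _ = m⁻¹ * (m * (t - 1) * (Real.log ((t - 1) / m) - 1) * (1 - r)
            + (t - 1) * (m * (1 - r) * (Real.log ((1 - r) / (2 * m)) + 1)))
          + Real.log M * ((t - 1) * (1 - r)) + 2 * m ^ 2 / M * Real.exp θ := by
        rw [hlog, hq]
        field_simp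
    _ ≤ _ := by
        gcongr
        · exact mul_sub_one_mul_log_sub_one_le_klFun ht hm₀ hm₁
        · exact mul_one_sub_mul_log_add_one_le_klFun hr₀ hr₁ hm₀

lemma ofReal_sub_one_mul_ofReal_one_sub_mul_le (ht : 1 < t) (hr₀ : 0 ≤ r) (hr₁ : r < 1)
    (hm₀ : 0 < m) (hm₁ : m ≤ 1) (hM : 1 ≤ M) (hθ : 0 ≤ θ) :
    ENNReal.ofReal (t - 1) * ENNReal.ofReal (1 - r) * (ENNReal.ofReal θ + 1) ≤
      (ENNReal.ofReal m)⁻¹ * (ENNReal.ofReal (klFun t) * ENNReal.ofReal (1 - r)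
          + ENNReal.ofReal (t - 1) * ENNReal.ofReal (klFun r))
        + ENNReal.ofReal (Real.log M) * (ENNReal.ofReal (t - 1) * ENNReal.ofReal (1 - r))
        + ENNReal.ofReal (2 * m ^ 2 / M) * ENNReal.ofReal (Real.exp θ) := by
  have hu : 0 ≤ t - 1 := sub_nonneg.2 ht.le
  have hv : 0 ≤ 1 - r := sub_nonneg.2 hr₁.le
  have hkt : 0 ≤ klFun t := klFun_nonneg (by linarith)
  have hkr : 0 ≤ klFun r := klFun_nonneg hr₀
  have hlog : 0 ≤ Real.log M := Real.log_nonneg hM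
  have hM₀ : 0 < M := zero_lt_one.trans_le hM
  have h := ENNReal.ofReal_le_ofReal
    (sub_one_mul_one_sub_mul_add_one_le (θ := θ) ht hr₀ hr₁ hm₀ hm₁ hM₀)
  have hmul {x y : ℝ} (hx : 0 ≤ x) : ENNReal.ofReal (x * y) =
      ENNReal.ofReal x * ENNReal.ofReal y := ENNReal.ofReal_mul hx
  rwa [ENNReal.ofReal_add (by positivity) (by positivity),
    ENNReal.ofReal_add (by positivity) (by positivity), hmul (mul_nonneg hu hv), hmul hu,
    hmul (inv_nonneg.2 hm₀.le), hmul hlog, hmul hu, hmul (by positivity),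
    ENNReal.ofReal_add hθ zero_le_one, ENNReal.ofReal_one,
    ENNReal.ofReal_add (by positivity) (by positivity), hmul hkt, hmul hu,
    ENNReal.ofReal_inv_of_pos hm₀] at h

end RealInequalities

section Measures

variable {X Y Z : Type*} [MeasurableSpace X] [MeasurableSpace Y] [MeasurableSpace Z]

lemma sq_lintegral_le_measure_univ_mul (κ : Measure X) {f : X → ℝ≥0∞} (hf : AEMeasurable f κ) :
    (∫⁻ x, f x ∂κ) ^ 2 ≤ κ Set.univ * ∫⁻ x, f x ^ 2 ∂κ := by
  have h := ENNReal.lintegral_mul_le_Lp_mul_Lq κ Real.HolderConjugate.two_two hf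
    (aemeasurable_const (b := 1))
  simp only [Pi.mul_apply, mul_one, ENNReal.rpow_two, one_pow, lintegral_one] at h
  calc (∫⁻ x, f x ∂κ) ^ 2
      ≤ ((∫⁻ x, f x ^ 2 ∂κ) ^ (1 / 2 : ℝ) * κ Set.univ ^ (1 / 2 : ℝ)) ^ 2 := by gcongr
    _ = κ Set.univ * ∫⁻ x, f x ^ 2 ∂κ := by
        rw [mul_pow, ← ENNReal.rpow_two, ← ENNReal.rpow_two, ← ENNReal.rpow_mul,
          ← ENNReal.rpow_mul]
        norm_num [mul_comm]

lemma add_sub_eq_add_sub_of_measure_le {μ ν : Measure X} [IsFiniteMeasure μ] (h : μ ≤ ν) :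
    ν + (μ - ν) = μ + (ν - μ) := by
  rw [Measure.sub_eq_zero_of_le h, add_zero, add_comm, Measure.sub_add_cancel_of_le h]

lemma measure_add_sub_comm (μ ν : Measure X) [IsFiniteMeasure μ] [IsFiniteMeasure ν] :
    ν + (μ - ν) = μ + (ν - μ) := by
  obtain ⟨s, hs⟩ := exists_isHahnDecomposition μ ν
  have hms := hs.measurableSet
  rw [← Measure.restrict_add_restrict_compl (μ := ν + (μ - ν)) hms,
    ← Measure.restrict_add_restrict_compl (μ := μ + (ν - μ)) hms]
  simp only [Measure.restrict_add, Measure.restrict_sub_eq_restrict_sub_restrict hms,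
    Measure.restrict_sub_eq_restrict_sub_restrict hms.compl,
    add_sub_eq_add_sub_of_measure_le hs.le_on, add_sub_eq_add_sub_of_measure_le hs.ge_on_compl]

lemma measure_sub_sub_comm (μ ν : Measure X) [IsFiniteMeasure μ] [IsFiniteMeasure ν] :
    ν - (ν - μ) = μ - (μ - ν) := by
  have hν : ν = ν - (ν - μ) + (ν - μ) := (Measure.sub_add_cancel_of_le Measure.sub_le).symm
  have hμ : μ = μ - (μ - ν) + (μ - ν) := (Measure.sub_add_cancel_of_le Measure.sub_le).symm
  have h : ν - (ν - μ) + ((ν - μ) + (μ - ν)) = μ - (μ - ν) + ((ν - μ) + (μ - ν)) := by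
    rw [← add_assoc, ← hν, add_comm (ν - μ), ← add_assoc, ← hμ, measure_add_sub_comm]
  simpa only [Measure.add_sub_cancel] using
    congrArg (· - ((ν - μ) + (μ - ν))) h

lemma measure_sub_univ_comm {μ ν : Measure X} [IsFiniteMeasure μ] [IsFiniteMeasure ν]
    (h : ν Set.univ = μ Set.univ) : (ν - μ) Set.univ = (μ - ν) Set.univ := by
  have hadd := congrArg (· Set.univ) (measure_add_sub_comm μ ν)
  simp only [Measure.add_apply, h] at hadd
  exact ((ENNReal.add_right_inj (measure_ne_top μ _)).1 hadd).symm

lemma optCost_add_le {c : X → X → ℝ} (hc : Measurable c.uncurry) (hdiag : ∀ x, c x x = 0)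
    (γ : Measure X) {α β : Measure X} [IsFiniteMeasure α] [IsFiniteMeasure β]
    (h : α Set.univ = β Set.univ) :
    optCost c (γ + α) (γ + β) ≤
      (α Set.univ)⁻¹ * ∫⁻ p, ENNReal.ofReal (c p.1 p.2) ∂(α.prod β) := by
  have hdiagm : Measurable fun x : X ↦ (x, x) := by fun_prop
  have hcm : Measurable fun p : X × X ↦ ENNReal.ofReal (c p.1 p.2) := hc.ennreal_ofReal
  have hcancel {α' : Measure X} (hα' : α' Set.univ = α Set.univ) :
      (α Set.univ)⁻¹ • α Set.univ • α' = α' := by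
    by_cases h₀ : α Set.univ = 0
    · simp [Measure.measure_univ_eq_zero.1 (hα'.trans h₀)]
    · rw [smul_smul, ENNReal.inv_mul_cancel h₀ (measure_ne_top α _), one_smul]
  set π := γ.map (fun x ↦ (x, x)) + (α Set.univ)⁻¹ • α.prod β with hπ
  have hfst : π.map Prod.fst = γ + α := by
    rw [hπ, Measure.map_add _ _ measurable_fst, Measure.map_map measurable_fst hdiagm,
      Measure.map_smul, Measure.map_fst_prod, ← h, hcancel rfl]
    exact congrArg (· + α) Measure.map_id
  have hsnd : π.map Prod.snd = γ + β := by
    rw [hπ, Measure.map_add _ _ measurable_snd, Measure.map_map measurable_snd hdiagm,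
      Measure.map_smul, Measure.map_snd_prod, hcancel h.symm]
    exact congrArg (· + β) Measure.map_id
  calc optCost c (γ + α) (γ + β) ≤ ∫⁻ p, ENNReal.ofReal (c p.1 p.2) ∂π :=
        iInf₂_le π ⟨hfst, hsnd⟩
    _ = (α Set.univ)⁻¹ * ∫⁻ p, ENNReal.ofReal (c p.1 p.2) ∂(α.prod β) := by
        rw [lintegral_add_measure, lintegral_map hcm hdiagm, lintegral_smul_measure]
        simp [hdiag]

lemma sq_optCost_le_lintegral_sq {c : X → X → ℝ} (hc : Measurable c.uncurry)
    (hdiag : ∀ x, c x x = 0) {μ ν : Measure X} [IsFiniteMeasure μ] [IsFiniteMeasure ν]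
    (h : ν Set.univ = μ Set.univ) :
    optCost c ν μ ^ 2 ≤
      ∫⁻ p, ENNReal.ofReal (c p.1 p.2) ^ 2 ∂((ν - μ).prod (μ - ν)) := by
  set m := (ν - μ) Set.univ with hm
  set S := ∫⁻ p, ENNReal.ofReal (c p.1 p.2) ^ 2 ∂((ν - μ).prod (μ - ν))
  have hμν : (μ - ν) Set.univ = m := (measure_sub_univ_comm h).symm
  have hcoupling := optCost_add_le hc hdiag (ν - (ν - μ)) hμν.symm
  rw [Measure.sub_add_cancel_of_le Measure.sub_le, measure_sub_sub_comm,
    Measure.sub_add_cancel_of_le Measure.sub_le] at hcoupling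
  have hcauchy := sq_lintegral_le_measure_univ_mul ((ν - μ).prod (μ - ν))
    (f := fun p ↦ ENNReal.ofReal (c p.1 p.2)) hc.ennreal_ofReal.aemeasurable
  rw [← Set.univ_prod_univ, Measure.prod_prod, hμν, ← hm] at hcauchy
  calc optCost c ν μ ^ 2
      ≤ (m⁻¹ * ∫⁻ p, ENNReal.ofReal (c p.1 p.2) ∂((ν - μ).prod (μ - ν))) ^ 2 := by gcongr
    _ ≤ m⁻¹ ^ 2 * (m * m * S) := by rw [mul_pow]; gcongr
    _ = (m⁻¹ * m) ^ 2 * S := by ring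
    _ ≤ 1 * S := by gcongr; exact pow_le_one' (ENNReal.inv_mul_le_one m) 2
    _ = S := one_mul S

lemma measure_sub_eq_withDensity_sub_one {μ ν : Measure X} [IsFiniteMeasure μ] [SigmaFinite ν]
    (h : ν ≪ μ) :
    ν - μ = μ.withDensity fun x ↦ ENNReal.ofReal ((ν.rnDeriv μ x).toReal - 1) := by
  have : IsFiniteMeasure (μ.withDensity 1) := by rwa [withDensity_one]
  calc ν - μ = μ.withDensity (ν.rnDeriv μ) - μ.withDensity 1 := by
        rw [Measure.withDensity_rnDeriv_eq ν μ h, withDensity_one]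
    _ = μ.withDensity (ν.rnDeriv μ - 1) :=
        (Measure.withDensity_sub (Measure.measurable_rnDeriv ν μ) measurable_one).symm
    _ = _ := withDensity_congr_ae <| by
        filter_upwards [ν.rnDeriv_lt_top μ] with x hx
        simp [ENNReal.ofReal_sub, ENNReal.ofReal_toReal hx.ne]

lemma measure_sub_eq_withDensity_one_sub {μ ν : Measure X} [IsFiniteMeasure ν] [SigmaFinite μ]
    (h : ν ≪ μ) :
    μ - ν = μ.withDensity fun x ↦ ENNReal.ofReal (1 - (ν.rnDeriv μ x).toReal) := by
  have hν := Measure.withDensity_rnDeriv_eq ν μ h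
  have : IsFiniteMeasure (μ.withDensity (ν.rnDeriv μ)) := by rwa [hν]
  calc μ - ν = μ.withDensity 1 - μ.withDensity (ν.rnDeriv μ) := by rw [hν, withDensity_one]
    _ = μ.withDensity (1 - ν.rnDeriv μ) :=
        (Measure.withDensity_sub measurable_one (Measure.measurable_rnDeriv ν μ)).symm
    _ = _ := withDensity_congr_ae <| by
        filter_upwards [ν.rnDeriv_lt_top μ] with x hx
        simp [ENNReal.ofReal_sub, ENNReal.ofReal_toReal hx.ne]

lemma withDensity_restrict_eq_withDensity {κ : Measure X} {f : X → ℝ≥0∞} {s : Set X}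
    (hs : MeasurableSet s) (h : ∀ x ∉ s, f x = 0) :
    (κ.restrict s).withDensity f = κ.withDensity f := by
  rw [← withDensity_indicator hs, Set.indicator_eq_self.2 (Function.support_subset_iff'.2 h)]

lemma measure_sub_eq_restrict_withDensity_sub_one {μ ν : Measure X} [IsFiniteMeasure μ]
    [SigmaFinite ν] (h : ν ≪ μ) :
    ν - μ = (μ.restrict {x | 1 < (ν.rnDeriv μ x).toReal}).withDensity
      fun x ↦ ENNReal.ofReal ((ν.rnDeriv μ x).toReal - 1) := by
  rw [measure_sub_eq_withDensity_sub_one h, withDensity_restrict_eq_withDensity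
    (measurableSet_lt measurable_const (Measure.measurable_rnDeriv ν μ).ennreal_toReal)]
  exact fun x hx ↦ ENNReal.ofReal_of_nonpos (sub_nonpos.2 (not_lt.1 hx))

lemma measure_sub_eq_restrict_withDensity_one_sub {μ ν : Measure X} [IsFiniteMeasure ν]
    [SigmaFinite μ] (h : ν ≪ μ) :
    μ - ν = (μ.restrict {x | (ν.rnDeriv μ x).toReal < 1}).withDensity
      fun x ↦ ENNReal.ofReal (1 - (ν.rnDeriv μ x).toReal) := by
  rw [measure_sub_eq_withDensity_one_sub h, withDensity_restrict_eq_withDensity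
    (measurableSet_lt (Measure.measurable_rnDeriv ν μ).ennreal_toReal measurable_const)]
  exact fun x hx ↦ ENNReal.ofReal_of_nonpos (sub_nonpos.2 (not_lt.1 hx))

lemma sq_measure_sub_univ_le_two_mul_klDiv (μ ν : Measure X) [IsProbabilityMeasure μ]
    [IsFiniteMeasure ν] : (μ - ν) Set.univ ^ 2 ≤ 2 * klDiv ν μ := by
  by_cases h : ν ≪ μ
  swap
  · simp [klDiv_of_not_ac h]
  set f := fun x ↦ (ν.rnDeriv μ x).toReal
  have hfm : Measurable f := (Measure.measurable_rnDeriv ν μ).ennreal_toReal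
  have hpointwise (x : X) : ENNReal.ofReal (1 - f x) ^ 2 ≤ 2 * ENNReal.ofReal (klFun (f x)) := by
    rcases le_total (f x) 1 with hx | hx
    · rw [← ENNReal.ofReal_pow (sub_nonneg.2 hx), ← ENNReal.ofReal_ofNat 2,
        ← ENNReal.ofReal_mul zero_le_two]
      have := sq_one_sub_div_two_le_klFun (ENNReal.toReal_nonneg : 0 ≤ f x) hx
      exact ENNReal.ofReal_le_ofReal (by linarith)
    · simp [ENNReal.ofReal_of_nonpos (sub_nonpos.2 hx)]
  calc (μ - ν) Set.univ ^ 2 = (∫⁻ x, ENNReal.ofReal (1 - f x) ∂μ) ^ 2 := by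
        rw [measure_sub_eq_withDensity_one_sub h, withDensity_apply _ .univ, Measure.restrict_univ]
    _ ≤ ∫⁻ x, ENNReal.ofReal (1 - f x) ^ 2 ∂μ := by
        simpa using sq_lintegral_le_measure_univ_mul μ
          (f := fun x ↦ ENNReal.ofReal (1 - f x)) (by fun_prop)
    _ ≤ ∫⁻ x, 2 * ENNReal.ofReal (klFun (f x)) ∂μ := lintegral_mono hpointwise
    _ = 2 * klDiv ν μ := by
        rw [lintegral_const_mul _ (by fun_prop), klDiv_eq_lintegral_klFun_of_ac h]

lemma two_mul_setLIntegral_prod_le {κ : Measure X} [SFinite κ] {F : X × X → ℝ≥0∞}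
    (hsymm : ∀ p, F p.swap = F p) {s t : Set X} (hs : MeasurableSet s) (ht : MeasurableSet t)
    (hst : Disjoint s t) :
    2 * ∫⁻ p in s ×ˢ t, F p ∂(κ.prod κ) ≤ ∫⁻ p, F p ∂(κ.prod κ) := by
  have hswap : ∫⁻ p in t ×ˢ s, F p ∂(κ.prod κ) = ∫⁻ p in s ×ˢ t, F p ∂(κ.prod κ) := by
    rw [← Measure.prod_restrict, ← lintegral_prod_swap, Measure.prod_restrict]
    simp only [hsymm]
  calc 2 * ∫⁻ p in s ×ˢ t, F p ∂(κ.prod κ)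
      = ∫⁻ p in s ×ˢ t ∪ t ×ˢ s, F p ∂(κ.prod κ) := by
        rw [lintegral_union (ht.prod hs) (Set.disjoint_prod.2 (.inl hst)), hswap, two_mul]
    _ ≤ ∫⁻ p, F p ∂(κ.prod κ) := setLIntegral_le_lintegral _ _

lemma lintegral_prod_withDensity_le_of_ae_le {α : Measure Y} {β : Measure Z} [SFinite α]
    [SFinite β] {U k : Y → ℝ≥0∞} {V l : Z → ℝ≥0∞} {Θ E : Y × Z → ℝ≥0∞} {m L C : ℝ≥0∞}
    (hU : Measurable U) (hV : Measurable V) (hk : Measurable k) (hl : Measurable l)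
    (hΘ : Measurable Θ) (hE : Measurable E) (hm₀ : m ≠ 0) (hm : m ≠ ∞)
    (hUm : ∫⁻ y, U y ∂α = m) (hVm : ∫⁻ z, V z ∂β = m)
    (hEm : C * ∫⁻ p, E p ∂(α.prod β) ≤ m ^ 2)
    (h : ∀ᵐ p ∂(α.prod β), U p.1 * V p.2 * (Θ p + 1) ≤
      m⁻¹ * (k p.1 * V p.2 + U p.1 * l p.2) + L * (U p.1 * V p.2) + C * E p) :
    ∫⁻ p, Θ p ∂((α.withDensity U).prod (β.withDensity V)) ≤
      ∫⁻ y, k y ∂α + ∫⁻ z, l z ∂β + L * m ^ 2 := by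
  have hUV : ∫⁻ p, U p.1 * V p.2 ∂(α.prod β) = m ^ 2 := by
    rw [lintegral_prod_mul hU.aemeasurable hV.aemeasurable, hUm, hVm, sq]
  have hkV : ∫⁻ p, k p.1 * V p.2 ∂(α.prod β) = (∫⁻ y, k y ∂α) * m := by
    rw [lintegral_prod_mul hk.aemeasurable hV.aemeasurable, hVm]
  have hUl : ∫⁻ p, U p.1 * l p.2 ∂(α.prod β) = m * ∫⁻ z, l z ∂β := by
    rw [lintegral_prod_mul hU.aemeasurable hl.aemeasurable, hUm]
  rw [← ENNReal.add_le_add_iff_right (pow_ne_top (n := 2) hm)]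
  calc ∫⁻ p, Θ p ∂((α.withDensity U).prod (β.withDensity V)) + m ^ 2
      = ∫⁻ p, U p.1 * V p.2 * (Θ p + 1) ∂(α.prod β) := by
        rw [prod_withDensity hU hV, lintegral_withDensity_eq_lintegral_mul _ (by fun_prop) hΘ,
          ← hUV, ← lintegral_add_right _ (by fun_prop)]
        simp only [Pi.mul_apply, mul_add, mul_one]
    _ ≤ ∫⁻ p, m⁻¹ * (k p.1 * V p.2 + U p.1 * l p.2) + L * (U p.1 * V p.2) + C * E p
          ∂(α.prod β) := lintegral_mono_ae h
    _ = m⁻¹ * ((∫⁻ y, k y ∂α) * m + m * ∫⁻ z, l z ∂β) + L * m ^ 2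
          + C * ∫⁻ p, E p ∂(α.prod β) := by
        rw [lintegral_add_left (by fun_prop), lintegral_add_left (by fun_prop),
          lintegral_const_mul _ (by fun_prop), lintegral_const_mul _ (by fun_prop),
          lintegral_const_mul _ (by fun_prop), lintegral_add_left (by fun_prop), hUV, hkV, hUl]
    _ ≤ m⁻¹ * ((∫⁻ y, k y ∂α) * m + m * ∫⁻ z, l z ∂β) + L * m ^ 2 + m ^ 2 := by gcongr
    _ = ∫⁻ y, k y ∂α + ∫⁻ z, l z ∂β + L * m ^ 2 + m ^ 2 := by
        rw [mul_comm _ m, ← mul_add, ← mul_assoc, ENNReal.inv_mul_cancel hm₀ hm, one_mul]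

lemma lintegral_prod_withDensity_le_lintegral_klFun_add {α : Measure Y} {β : Measure Z}
    [SFinite α] [SFinite β] {f : Y → ℝ} {g : Z → ℝ} {θ : Y × Z → ℝ} {m M : ℝ}
    (hf : Measurable f) (hg : Measurable g) (hθ : Measurable θ) (hθ₀ : ∀ p, 0 ≤ θ p)
    (hf₁ : ∀ᵐ y ∂α, 1 < f y) (hg₀ : ∀ᵐ z ∂β, 0 ≤ g z) (hg₁ : ∀ᵐ z ∂β, g z < 1)
    (hm₀ : 0 < m) (hm₁ : m ≤ 1) (hM : 1 ≤ M)
    (hfm : ∫⁻ y, ENNReal.ofReal (f y - 1) ∂α = ENNReal.ofReal m)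
    (hgm : ∫⁻ z, ENNReal.ofReal (1 - g z) ∂β = ENNReal.ofReal m)
    (hexp : 2 * ∫⁻ p, ENNReal.ofReal (Real.exp (θ p)) ∂(α.prod β) ≤ ENNReal.ofReal M) :
    ∫⁻ p, ENNReal.ofReal (θ p) ∂((α.withDensity fun y ↦ ENNReal.ofReal (f y - 1)).prod
        (β.withDensity fun z ↦ ENNReal.ofReal (1 - g z))) ≤
      ∫⁻ y, ENNReal.ofReal (klFun (f y)) ∂α + ∫⁻ z, ENNReal.ofReal (klFun (g z)) ∂β
        + ENNReal.ofReal (Real.log M) * ENNReal.ofReal m ^ 2 := by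
  have hM₀ : 0 < M := zero_lt_one.trans_le hM
  have hmass : ENNReal.ofReal (2 * m ^ 2 / M) *
      ∫⁻ p, ENNReal.ofReal (Real.exp (θ p)) ∂(α.prod β) ≤ ENNReal.ofReal m ^ 2 :=
    calc _ = ENNReal.ofReal (m ^ 2 / M) *
            (2 * ∫⁻ p, ENNReal.ofReal (Real.exp (θ p)) ∂(α.prod β)) := by
          rw [mul_div_assoc, mul_comm 2, ENNReal.ofReal_mul (by positivity), mul_assoc,
            ENNReal.ofReal_ofNat]
      _ ≤ ENNReal.ofReal (m ^ 2 / M) * ENNReal.ofReal M := by gcongr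
      _ = ENNReal.ofReal m ^ 2 := by
          rw [← ENNReal.ofReal_mul (by positivity), div_mul_cancel₀ _ hM₀.ne',
            ENNReal.ofReal_pow hm₀.le]
  refine lintegral_prod_withDensity_le_of_ae_le (by fun_prop) (by fun_prop) (by fun_prop)
    (by fun_prop) (by fun_prop) (by fun_prop) (ENNReal.ofReal_pos.2 hm₀).ne'
    ENNReal.ofReal_ne_top hfm hgm hmass ?_
  filter_upwards [Measure.quasiMeasurePreserving_fst.ae hf₁,
    Measure.quasiMeasurePreserving_snd.ae hg₀, Measure.quasiMeasurePreserving_snd.ae hg₁]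
    with p hp₁ hp₂ hp₃
  exact ofReal_sub_one_mul_ofReal_one_sub_mul_le hp₁ hp₂ hp₃ hm₀ hm₁ hM (hθ₀ p)

lemma one_le_of_lintegral_exp_le {κ : Measure X} [IsProbabilityMeasure κ] {θ : X → ℝ} {M : ℝ}
    (hθ₀ : ∀ x, 0 ≤ θ x) (h : ∫⁻ x, ENNReal.ofReal (Real.exp (θ x)) ∂κ ≤ ENNReal.ofReal M) :
    1 ≤ M := by
  rw [← ENNReal.one_le_ofReal]
  calc (1 : ℝ≥0∞) = ∫⁻ _, 1 ∂κ := by simp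
    _ ≤ ∫⁻ x, ENNReal.ofReal (Real.exp (θ x)) ∂κ :=
        lintegral_mono fun x ↦ ENNReal.one_le_ofReal.2 (Real.one_le_exp (hθ₀ x))
    _ ≤ ENNReal.ofReal M := h

lemma lintegral_prod_sub_le_klDiv_add {μ ν : Measure X} [IsProbabilityMeasure μ]
    [IsProbabilityMeasure ν] {θ : X × X → ℝ} {M : ℝ} (hθ : Measurable θ) (hθ₀ : ∀ p, 0 ≤ θ p)
    (hsymm : ∀ p, θ p.swap = θ p)
    (hexp : ∫⁻ p, ENNReal.ofReal (Real.exp (θ p)) ∂(μ.prod μ) ≤ ENNReal.ofReal M) :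
    ∫⁻ p, ENNReal.ofReal (θ p) ∂((ν - μ).prod (μ - ν)) ≤
      klDiv ν μ + ENNReal.ofReal (Real.log M) * (μ - ν) Set.univ ^ 2 := by
  by_cases hac : ν ≪ μ
  swap
  · simp [klDiv_of_not_ac hac]
  rcases eq_or_ne ((μ - ν) Set.univ) 0 with h₀ | h₀
  · simp [Measure.measure_univ_eq_zero.1 h₀]
  set m := ((μ - ν) Set.univ).toReal
  have hm : (μ - ν) Set.univ = ENNReal.ofReal m := (ENNReal.ofReal_toReal (measure_ne_top _ _)).symm
  have hm₀ : 0 < m := ENNReal.toReal_pos h₀ (measure_ne_top _ _)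
  have hm₁ : m ≤ 1 := ENNReal.toReal_le_of_le_ofReal zero_le_one <| by
    simpa using Measure.sub_le (μ := μ) (ν := ν) Set.univ
  have hα := measure_sub_eq_restrict_withDensity_sub_one hac
  have hβ := measure_sub_eq_restrict_withDensity_one_sub hac
  set f := fun x ↦ (ν.rnDeriv μ x).toReal
  have hf : Measurable f := (Measure.measurable_rnDeriv ν μ).ennreal_toReal
  set s := {x | 1 < f x}
  set t := {x | f x < 1}
  have hs : MeasurableSet s := measurableSet_lt measurable_const hf
  have ht : MeasurableSet t := measurableSet_lt hf measurable_const
  have hst : Disjoint s t := Set.disjoint_left.2 fun x (hxs : 1 < f x) hxt ↦ lt_asymm hxs hxt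
  have hfs : ∀ᵐ x ∂μ.restrict s, 1 < f x := ae_restrict_mem hs
  have hft : ∀ᵐ x ∂μ.restrict t, f x < 1 := ae_restrict_mem ht
  have hαm : ∫⁻ x in s, ENNReal.ofReal (f x - 1) ∂μ = ENNReal.ofReal m := by
    rw [← hm, ← measure_sub_univ_comm (by simp), hα, withDensity_apply _ .univ,
      Measure.restrict_univ]
  have hβm : ∫⁻ x in t, ENNReal.ofReal (1 - f x) ∂μ = ENNReal.ofReal m := by
    rw [← hm, hβ, withDensity_apply _ .univ, Measure.restrict_univ]
  have hhalf : 2 * ∫⁻ p, ENNReal.ofReal (Real.exp (θ p)) ∂((μ.restrict s).prod (μ.restrict t))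
      ≤ ENNReal.ofReal M := by
    rw [Measure.prod_restrict]
    exact (two_mul_setLIntegral_prod_le (by simp [hsymm]) hs ht hst).trans hexp
  rw [hm, hα, hβ, klDiv_eq_lintegral_klFun_of_ac hac]
  refine (lintegral_prod_withDensity_le_lintegral_klFun_add hf hf hθ hθ₀ hfs
    (.of_forall fun _ ↦ ENNReal.toReal_nonneg) hft hm₀ hm₁
    (one_le_of_lintegral_exp_le hθ₀ hexp) hαm hβm hhalf).trans ?_
  gcongr
  rw [← lintegral_union ht hst]
  exact setLIntegral_le_lintegral _ _

lemma lintegral_prod_sub_le_mul_klDiv {μ ν : Measure X} [IsProbabilityMeasure μ]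
    [IsProbabilityMeasure ν] {θ : X × X → ℝ} {M : ℝ} (hθ : Measurable θ) (hθ₀ : ∀ p, 0 ≤ θ p)
    (hsymm : ∀ p, θ p.swap = θ p)
    (hexp : ∫⁻ p, ENNReal.ofReal (Real.exp (θ p)) ∂(μ.prod μ) ≤ ENNReal.ofReal M) :
    ∫⁻ p, ENNReal.ofReal (θ p) ∂((ν - μ).prod (μ - ν)) ≤
      ENNReal.ofReal (1 + 2 * Real.log M) * klDiv ν μ := by
  have hlog : 0 ≤ Real.log M := Real.log_nonneg (one_le_of_lintegral_exp_le hθ₀ hexp)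
  calc ∫⁻ p, ENNReal.ofReal (θ p) ∂((ν - μ).prod (μ - ν))
      ≤ klDiv ν μ + ENNReal.ofReal (Real.log M) * (μ - ν) Set.univ ^ 2 :=
        lintegral_prod_sub_le_klDiv_add hθ hθ₀ hsymm hexp
    _ ≤ klDiv ν μ + ENNReal.ofReal (Real.log M) * (2 * klDiv ν μ) := by
        gcongr
        exact sq_measure_sub_univ_le_two_mul_klDiv μ ν
    _ = ENNReal.ofReal (1 + 2 * Real.log M) * klDiv ν μ := by
        rw [ENNReal.ofReal_add zero_le_one (by positivity), ENNReal.ofReal_mul zero_le_two,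
          ENNReal.ofReal_one, ENNReal.ofReal_ofNat]
        ring

lemma relEntropy_eq_klDiv (μ ν : Measure X) [IsFiniteMeasure μ] [IsFiniteMeasure ν] :
    relEntropy ν μ = klDiv ν μ := by
  simp only [relEntropy, klDiv_eq_lintegral_klFun, klFun_apply, add_sub_right_comm]

lemma ofReal_sq_le_ofReal_sq (x : ℝ) : ENNReal.ofReal x ^ 2 ≤ ENNReal.ofReal (x ^ 2) := by
  rw [← sq_abs x, ENNReal.ofReal_pow (abs_nonneg x)]
  gcongr
  exact le_abs_self x

lemma sq_optCost_le_mul_relEntropy {c : X → X → ℝ} (hc : Measurable c.uncurry)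
    (hdiag : ∀ x, c x x = 0) (hsymm : ∀ x y, c x y = c y x) {μ ν : Measure X}
    [IsProbabilityMeasure μ] [IsProbabilityMeasure ν] {a M : ℝ} (ha : 0 < a)
    (hM : ∫⁻ p : X × X, ENNReal.ofReal (Real.exp (a * c p.1 p.2 ^ 2)) ∂(μ.prod μ) ≤
      ENNReal.ofReal M) :
    optCost c ν μ ^ 2 ≤ ENNReal.ofReal (a⁻¹ * (1 + 2 * Real.log M)) * relEntropy ν μ := by
  have hc' : Measurable fun p : X × X ↦ c p.1 p.2 := hc
  calc optCost c ν μ ^ 2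
      ≤ ∫⁻ p, ENNReal.ofReal (c p.1 p.2) ^ 2 ∂((ν - μ).prod (μ - ν)) :=
        sq_optCost_le_lintegral_sq hc hdiag (by simp)
    _ ≤ ∫⁻ p, ENNReal.ofReal a⁻¹ * ENNReal.ofReal (a * c p.1 p.2 ^ 2)
          ∂((ν - μ).prod (μ - ν)) := by
        refine lintegral_mono fun p ↦ (ofReal_sq_le_ofReal_sq _).trans_eq ?_
        rw [← ENNReal.ofReal_mul (by positivity), inv_mul_cancel_left₀ ha.ne']
    _ ≤ ENNReal.ofReal a⁻¹ * (ENNReal.ofReal (1 + 2 * Real.log M) * klDiv ν μ) := by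
        rw [lintegral_const_mul _ (by fun_prop)]
        gcongr
        exact lintegral_prod_sub_le_mul_klDiv (by fun_prop) (fun p ↦ by positivity)
          (fun p ↦ by rw [Prod.fst_swap, Prod.snd_swap, hsymm]) hM
    _ = ENNReal.ofReal (a⁻¹ * (1 + 2 * Real.log M)) * relEntropy ν μ := by
        rw [relEntropy_eq_klDiv, ENNReal.ofReal_mul (by positivity), mul_assoc]

end Measures

theorem T1_of_square_exponential_moment_general {X : Type*} [MeasurableSpace X]
    {c : X → X → ℝ} (hc : Measurable c.uncurry) (hdiag : ∀ x, c x x = 0)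
    (hsymm : ∀ x y, c x y = c y x) (μ : Measure X) [IsProbabilityMeasure μ] {b M : ℝ}
    (hb : 0 < b)
    (hM : ∫⁻ p : X × X, ENNReal.ofReal (Real.exp (b ^ 2 * c p.1 p.2 ^ 2 / 2)) ∂(μ.prod μ) ≤
      ENNReal.ofReal M)
    (ν : Measure X) [IsProbabilityMeasure ν] :
    optCost c ν μ ≤ ENNReal.ofReal ((1 / b) * Real.sqrt (1 + 2 * Real.log M)) *
      (2 * relEntropy ν μ) ^ (1 / 2 : ℝ) := by
  have hlog : 0 ≤ Real.log M :=
    Real.log_nonneg (one_le_of_lintegral_exp_le (fun p ↦ by positivity) hM)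
  rw [← ENNReal.pow_le_pow_left_iff two_ne_zero]
  calc optCost c ν μ ^ 2
      ≤ ENNReal.ofReal ((b ^ 2 / 2)⁻¹ * (1 + 2 * Real.log M)) * relEntropy ν μ :=
        sq_optCost_le_mul_relEntropy hc hdiag hsymm (by positivity)
          (by simpa only [div_mul_eq_mul_div] using hM)
    _ = ENNReal.ofReal ((1 / b) * Real.sqrt (1 + 2 * Real.log M)) ^ 2 *
          (2 * relEntropy ν μ) := by
        rw [← ENNReal.ofReal_pow (by positivity), mul_pow, Real.sq_sqrt (by positivity),
          ← mul_assoc, ← ENNReal.ofReal_ofNat 2, ← ENNReal.ofReal_mul (by positivity)]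
        congr 2
        field_simp
    _ = (ENNReal.ofReal ((1 / b) * Real.sqrt (1 + 2 * Real.log M)) *
          (2 * relEntropy ν μ) ^ (1 / 2 : ℝ)) ^ 2 := by
        rw [mul_pow, ← ENNReal.rpow_mul_natCast]
        norm_num

/-- Square-exponential moment implies `T₁` with explicit constant: if
`M = ∫∫ e^{b² d(x,y)²/2} dμ dμ < ∞`, then for every probability measure `ν`,
`𝒯_d(ν,μ) ≤ (1/b) √(1 + 2 log M) √(2 H(ν|μ))`. -/
theorem T1_of_square_exponential_moment
    {X : Type*} [MetricSpace X] [CompleteSpace X] [TopologicalSpace.SeparableSpace X]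
    [MeasurableSpace X] [BorelSpace X]
    (μ : Measure X) [IsProbabilityMeasure μ]
    (b M : ℝ) (hb : 0 < b)
    (hM : ∫⁻ p : X × X, ENNReal.ofReal (Real.exp (b ^ 2 * dist p.1 p.2 ^ 2 / 2))
        ∂(μ.prod μ) = ENNReal.ofReal M)
    (ν : Measure X) [IsProbabilityMeasure ν] :
    optCost (fun x y => dist x y) ν μ ≤
      ENNReal.ofReal ((1 / b) * Real.sqrt (1 + 2 * Real.log M)) *
        (2 * relEntropy ν μ) ^ (1 / 2 : ℝ) := by
  exact T1_of_square_exponential_moment_general measurable_dist dist_self dist_comm μ hb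
    hM.le ν
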